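/- Let G = (U, E) be an undirected graph with U = {u_1, …, u_r}, r ≥ 3, E = {e_1, …, e_s}, s ≥ 1, and let h be an integer with 1 ≤ h ≤ r−1. Consider the partial profile with 2r−1 voters, alternative set A = {p, b, d} ∪ {c_j : e_j ∈ E}, and agenda L: b ▷ d ▷ p ▷ c_s ▷ c_{s−1} ▷ … ▷ c_1 constructed from G and h as described. Then G has a vertex cover of size at most h if and only if there is a completion of the vertex voters' partial orders to linear orders under which p is the amendment winner under L. -/

import Mathlib

open scoped Classical

/-- The number of voters in profile `prof` who strictly prefer `b` to `c`. -/
noncomputable def prefCount {α : Type*} {n : ℕ} (prof : Fin n → α → α → Prop) (b c : α) : ℕ :=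
  (Finset.univ.filter fun i => prof i b c).card

/-- Alternative `b` beats alternative `c`: more than `n/2` voters prefer `b` to `c`. -/
def Beats {α : Type*} {n : ℕ} (prof : Fin n → α → α → Prop) (b c : α) : Prop :=
  2 * prefCount prof b c > n

/-- `a` is an `S`-majority winner: more than `n/2` voters prefer `a`
to every alternative of `S \ {a}`. -/
def IsMajWinner {α : Type*} {n : ℕ} (prof : Fin n → α → α → Prop) (S : Finset α) (a : α) :
    Prop :=
  2 * (Finset.univ.filter fun i => ∀ c ∈ S, c ≠ a → prof i a c).card > n

/-- The successive winner for the agenda given as a list: the first alternative of the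
agenda that is a majority winner with respect to itself and all later alternatives. -/
noncomputable def succWinner {α : Type*} [DecidableEq α] {n : ℕ}
    (prof : Fin n → α → α → Prop) : List α → Option α
  | [] => none
  | a :: rest =>
    if IsMajWinner prof ((a :: rest).toFinset) a then some a
    else succWinner prof rest

/-- The amendment winner for the agenda given as a list: the current round winner is
challenged by the next alternative on the agenda, which takes over if it beats it. -/
noncomputable def amendWinner {α : Type*} {n : ℕ}
    (prof : Fin n → α → α → Prop) : List α → Option α
  | [] => none
  | a :: rest => some (rest.foldl (fun win c => if Beats prof c win then c else win) a)

/-- The alternatives of the reduction: the preferred alternative `P`, the helper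
alternative `B`, the dummy alternative `D`, and one edge alternative `C j` for each
edge `e_j`. -/
inductive Alt (s : ℕ) : Type
  | P : Alt s
  | B : Alt s
  | D : Alt s
  | C : Fin s → Alt s
  deriving DecidableEq

/-- Edge `j` is incident to vertex `i`. -/
def Inc {r s : ℕ} (e : Fin s → Fin r × Fin r) (i : Fin r) (j : Fin s) : Prop :=
  (e j).1 = i ∨ (e j).2 = i

/-- The strict partial order of the vertex voter `v_i`: the non-incident edge
alternatives (in index order) above everything else, together with the two mutually
incomparable chains `⟨I(u_i)⟩ ≻ d` and `b ≻ p`. -/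
def vVoter {r s : ℕ} (e : Fin s → Fin r × Fin r) (i : Fin r) :
    Alt s → Alt s → Prop := fun x y =>
  match x, y with
  | Alt.C j, Alt.C j' =>
      (¬ Inc e i j ∧ Inc e i j') ∨ (Inc e i j ∧ Inc e i j' ∧ j < j') ∨
        (¬ Inc e i j ∧ ¬ Inc e i j' ∧ j < j')
  | Alt.C _, Alt.D => True
  | Alt.C j, Alt.B => ¬ Inc e i j
  | Alt.C j, Alt.P => ¬ Inc e i j
  | Alt.B, Alt.P => True
  | _, _ => False

/-- The linear order `p ≻ c_1 ≻ … ≻ c_s ≻ b ≻ d` of the first group of auxiliary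
voters. -/
def aux1 {s : ℕ} : Alt s → Alt s → Prop := fun x y =>
  match x, y with
  | Alt.P, Alt.C _ => True
  | Alt.P, Alt.B => True
  | Alt.P, Alt.D => True
  | Alt.C j, Alt.C j' => j < j'
  | Alt.C _, Alt.B => True
  | Alt.C _, Alt.D => True
  | Alt.B, Alt.D => True
  | _, _ => False

/-- The linear order `p ≻ d ≻ c_1 ≻ … ≻ c_s ≻ b` of the second group of auxiliary
voters. -/
def aux2 {s : ℕ} : Alt s → Alt s → Prop := fun x y =>
  match x, y with
  | Alt.P, Alt.C _ => True
  | Alt.P, Alt.B => True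
  | Alt.P, Alt.D => True
  | Alt.D, Alt.C _ => True
  | Alt.D, Alt.B => True
  | Alt.C j, Alt.C j' => j < j'
  | Alt.C _, Alt.B => True
  | _, _ => False

/-- The partial profile of the reduction: `r` vertex voters, `r − h − 1` auxiliary voters
of the first kind, and `h` auxiliary voters of the second kind (`2r − 1` voters). -/
def profile11 (r s h : ℕ) (e : Fin s → Fin r × Fin r) :
    Fin (2 * r - 1) → Alt s → Alt s → Prop := fun idx =>
  if hi : (idx : ℕ) < r then vVoter e ⟨idx, hi⟩
  else if (idx : ℕ) < r + (r - h - 1) then aux1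
  else aux2

/-- The agenda `b ▷ d ▷ p ▷ c_s ▷ c_{s−1} ▷ … ▷ c_1` of the reduction. -/
def agenda11 (s : ℕ) : List (Alt s) :=
  [Alt.B, Alt.D, Alt.P] ++ ((List.finRange s).reverse.map Alt.C)

lemma count_split (r h : ℕ) (hr : 3 ≤ r) (hhr : h ≤ r - 1) (Q : Fin (2 * r - 1) → Prop) :
    (Finset.univ.filter Q).card =
      (Finset.univ.filter fun i : Fin r => Q ⟨i, by omega⟩).card +
      (Finset.univ.filter fun i : Fin (r - h - 1) => Q ⟨r + i, by omega⟩).card +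
      (Finset.univ.filter fun i : Fin h => Q ⟨r + (r - h - 1) + i, by omega⟩).card := by
  have hn : r + (r - h - 1) + h = 2 * r - 1 := by omega
  simp only [Finset.card_filter]
  rw [← Fintype.sum_equiv (finCongr hn) (fun i => if Q (finCongr hn i) then 1 else 0) _
    (fun i => rfl), Fin.sum_univ_add, Fin.sum_univ_add]
  rfl

lemma foldl_ne {α : Type*} {n : ℕ} (prof : Fin n → α → α → Prop) (p : α) (l : List α)
    (hl : p ∉ l) (w : α) :
    l.foldl (fun win c => if Beats prof c win then c else win) w = p ↔
      (w = p ∧ ∀ c ∈ l, ¬ Beats prof c p) := by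
  induction l generalizing w with
  | nil => simp
  | cons a l ih =>
    simp only [List.mem_cons, not_or] at hl
    rw [List.foldl_cons, ih hl.2]
    by_cases hb : Beats prof a w
    · rw [if_pos hb]
      constructor
      · rintro ⟨h1, _⟩
        exact absurd h1.symm hl.1
      · rintro ⟨rfl, h2⟩
        exact absurd hb (h2 a (by simp))
    · rw [if_neg hb]
      constructor
      · rintro ⟨rfl, h2⟩
        refine ⟨rfl, ?_⟩
        intro c hc
        rcases List.mem_cons.1 hc with rfl | hc
        · exact hb
        · exact h2 c hc
      · rintro ⟨h1, h2⟩
        exact ⟨h1, fun c hc => h2 c (by simp [hc])⟩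

lemma amend_iff {s n : ℕ} (prof : Fin n → Alt s → Alt s → Prop)
    (hPB : ¬ Beats prof Alt.P Alt.B) :
    amendWinner prof (agenda11 s) = some Alt.P ↔
      (Beats prof Alt.D Alt.B ∧ Beats prof Alt.P Alt.D ∧
        ∀ j, ¬ Beats prof (Alt.C j) Alt.P) := by
  have hl : Alt.P ∉ ((List.finRange s).reverse.map Alt.C) := by simp
  simp only [agenda11, amendWinner, List.cons_append, List.nil_append, List.foldl_cons,
    Option.some.injEq]
  rw [foldl_ne prof Alt.P _ hl]
  by_cases h1 : Beats prof Alt.D Alt.B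
  · by_cases h2 : Beats prof Alt.P Alt.D <;> simp [h1, h2]
  · simp [h1, hPB]

lemma sto_of_rank {α : Type*} (f : α → ℕ) (hf : Function.Injective f) :
    IsStrictTotalOrder α (fun x y => f x < f y) where
  irrefl x := lt_irrefl _
  trans x y z := lt_trans
  trichotomous x y h1 h2 := hf (by omega)

noncomputable def rkIn {r s : ℕ} (e : Fin s → Fin r × Fin r) (i : Fin r) : Alt s → ℕ
  | Alt.B => s
  | Alt.P => s + 1
  | Alt.D => 2 * s + 2
  | Alt.C j => if Inc e i j then s + 2 + j else j

noncomputable def rkOut {r s : ℕ} (e : Fin s → Fin r × Fin r) (i : Fin r) : Alt s → ℕ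
  | Alt.B => 2 * s + 1
  | Alt.P => 2 * s + 2
  | Alt.D => 2 * s
  | Alt.C j => if Inc e i j then s + j else j

def rk1 {s : ℕ} : Alt s → ℕ
  | Alt.P => 0
  | Alt.B => s + 1
  | Alt.D => s + 2
  | Alt.C j => 1 + j

def rk2 {s : ℕ} : Alt s → ℕ
  | Alt.P => 0
  | Alt.D => 1
  | Alt.B => s + 2
  | Alt.C j => 2 + j

lemma rkIn_inj {r s : ℕ} (e : Fin s → Fin r × Fin r) (i : Fin r) :
    Function.Injective (rkIn e i) := by
  intro x y hxy
  cases x <;> cases y <;> simp only [rkIn] at hxy <;> first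
    | rfl
    | (congr 1; apply Fin.ext; split_ifs at hxy <;> omega)
    | (exfalso; split_ifs at hxy <;> omega)
    | omega

lemma rkOut_inj {r s : ℕ} (e : Fin s → Fin r × Fin r) (i : Fin r) :
    Function.Injective (rkOut e i) := by
  intro x y hxy
  cases x <;> cases y <;> simp only [rkOut] at hxy <;> first
    | rfl
    | (congr 1; apply Fin.ext; split_ifs at hxy <;> omega)
    | (exfalso; split_ifs at hxy <;> omega)
    | omega

lemma rk1_inj {s : ℕ} : Function.Injective (rk1 (s := s)) := by
  intro x y hxy
  cases x <;> cases y <;> simp only [rk1] at hxy <;> first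
    | rfl
    | (congr 1; apply Fin.ext; omega)
    | omega

lemma rk2_inj {s : ℕ} : Function.Injective (rk2 (s := s)) := by
  intro x y hxy
  cases x <;> cases y <;> simp only [rk2] at hxy <;> first
    | rfl
    | (congr 1; apply Fin.ext; omega)
    | omega

lemma rkIn_ext {r s : ℕ} (e : Fin s → Fin r × Fin r) (i : Fin r) (x y : Alt s)
    (h : vVoter e i x y) : rkIn e i x < rkIn e i y := by
  cases x <;> cases y <;> simp only [vVoter, rkIn, Fin.lt_def] at h ⊢ <;>
    (try split_ifs) <;> first | omega | (simp_all; done) | (simp_all; omega)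

lemma rkOut_ext {r s : ℕ} (e : Fin s → Fin r × Fin r) (i : Fin r) (x y : Alt s)
    (h : vVoter e i x y) : rkOut e i x < rkOut e i y := by
  cases x <;> cases y <;> simp only [vVoter, rkOut, Fin.lt_def] at h ⊢ <;>
    (try split_ifs) <;> first | omega | (simp_all; done) | (simp_all; omega)

lemma rk1_ext {s : ℕ} (x y : Alt s) (h : aux1 x y) : rk1 x < rk1 y := by
  cases x <;> cases y <;> simp only [aux1, rk1, Fin.lt_def] at h ⊢ <;> omega

lemma rk2_ext {s : ℕ} (x y : Alt s) (h : aux2 x y) : rk2 x < rk2 y := by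
  cases x <;> cases y <;> simp only [aux2, rk2, Fin.lt_def] at h ⊢ <;> omega

noncomputable def theRank (r s h : ℕ) (e : Fin s → Fin r × Fin r) (S : Finset (Fin r))
    (idx : Fin (2 * r - 1)) : Alt s → ℕ :=
  if hi : (idx : ℕ) < r then (if ⟨idx, hi⟩ ∈ S then rkIn e ⟨idx, hi⟩ else rkOut e ⟨idx, hi⟩)
  else if (idx : ℕ) < r + (r - h - 1) then rk1
  else rk2

lemma not_beats_PB (r s h : ℕ) (hr : 3 ≤ r) (hhr : h ≤ r - 1)
    (e : Fin s → Fin r × Fin r) (comp : Fin (2 * r - 1) → Alt s → Alt s → Prop)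
    (hc : ∀ idx, IsStrictTotalOrder (Alt s) (comp idx) ∧
        ∀ x y, profile11 r s h e idx x y → comp idx x y) :
    ¬ Beats comp Alt.P Alt.B := by
  unfold Beats prefCount
  rw [count_split r h hr hhr]
  have h0 : (Finset.univ.filter fun i : Fin r =>
      comp ⟨i, by omega⟩ Alt.P Alt.B).card = 0 := by
    rw [Finset.card_eq_zero, Finset.filter_eq_empty_iff]
    intro i _ hi
    have := (hc ⟨i, by omega⟩).1
    have h2 := (hc ⟨i, by omega⟩).2 Alt.B Alt.P (by simp [profile11, vVoter])
    exact this.irrefl _ (this.trans _ _ _ hi h2)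
  have h1 := Finset.card_le_univ (Finset.univ.filter fun i : Fin (r - h - 1) =>
      comp ⟨r + i, by omega⟩ Alt.P Alt.B)
  have h2 := Finset.card_le_univ (Finset.univ.filter fun i : Fin h =>
      comp ⟨r + (r - h - 1) + i, by omega⟩ Alt.P Alt.B)
  rw [Fintype.card_fin] at h1 h2
  omega

/-- `G` has a vertex cover of size at most `h` iff some completion of the constructed
partial profile makes `p` the amendment winner under the agenda
`b ▷ d ▷ p ▷ c_s ▷ … ▷ c_1`. -/
theorem stmt11 (r s h : ℕ) (hr : 3 ≤ r) (hs : 1 ≤ s) (hh1 : 1 ≤ h) (hhr : h ≤ r - 1)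
    (e : Fin s → Fin r × Fin r) (he : ∀ j, (e j).1 ≠ (e j).2) :
    (∃ S : Finset (Fin r), S.card ≤ h ∧ ∀ j, (e j).1 ∈ S ∨ (e j).2 ∈ S) ↔
    (∃ comp : Fin (2 * r - 1) → Alt s → Alt s → Prop,
      (∀ idx, IsStrictTotalOrder (Alt s) (comp idx) ∧
        ∀ x y, profile11 r s h e idx x y → comp idx x y) ∧
      amendWinner comp (agenda11 s) = some Alt.P) := by
  constructor
  · rintro ⟨S, hS, hcov⟩
    have hcomp : ∀ idx, IsStrictTotalOrder (Alt s)
          (fun x y => theRank r s h e S idx x < theRank r s h e S idx y) ∧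
        ∀ x y, profile11 r s h e idx x y →
          theRank r s h e S idx x < theRank r s h e S idx y := by
      intro idx
      constructor
      · apply sto_of_rank
        unfold theRank
        split_ifs
        exacts [rkIn_inj _ _, rkOut_inj _ _, rk1_inj, rk2_inj]
      · intro x y hxy
        unfold profile11 at hxy
        unfold theRank
        split_ifs at hxy ⊢
        exacts [rkIn_ext _ _ _ _ hxy, rkOut_ext _ _ _ _ hxy, rk1_ext _ _ hxy, rk2_ext _ _ hxy]
    refine ⟨fun idx x y => theRank r s h e S idx x < theRank r s h e S idx y, hcomp, ?_⟩
    rw [amend_iff _ (not_beats_PB r s h hr hhr e _ hcomp)]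
    have hA : ∀ i : Fin r, theRank r s h e S ⟨i, by omega⟩ =
        if i ∈ S then rkIn e i else rkOut e i := by
      intro i; simp [theRank]
    have hB : ∀ i : Fin (r - h - 1), theRank r s h e S ⟨r + i, by omega⟩ = rk1 := by
      intro i; simp [theRank]
    have hC : ∀ i : Fin h, theRank r s h e S ⟨r + (r - h - 1) + i, by omega⟩ = rk2 := by
      intro i
      have : ¬ (r + (r - h - 1) + (i : ℕ) < r) := by omega
      simp [theRank, this]
    unfold Beats prefCount
    refine ⟨?_, ?_, ?_⟩
    · rw [count_split r h hr hhr]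
      simp only [hA, hB, hC]
      have h1 : (Finset.univ.filter fun i : Fin r =>
          (if i ∈ S then rkIn e i else rkOut e i) Alt.D <
            (if i ∈ S then rkIn e i else rkOut e i) Alt.B) = Sᶜ := by
        ext i
        by_cases hi : i ∈ S <;> simp [hi, rkIn, rkOut]
        omega
      rw [h1, Finset.card_compl]
      simp [rk2]
      omega
    · rw [count_split r h hr hhr]
      simp only [hA, hB, hC]
      have h1 : (Finset.univ.filter fun i : Fin r =>
          (if i ∈ S then rkIn e i else rkOut e i) Alt.P <
            (if i ∈ S then rkIn e i else rkOut e i) Alt.D) = S := by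
        ext i
        by_cases hi : i ∈ S <;> simp [hi, rkIn, rkOut]
        omega
      rw [h1]
      have h2 : 0 < S.card := by
        rw [Finset.card_pos]
        rcases hcov ⟨0, hs⟩ with hh | hh <;> exact ⟨_, hh⟩
      simp [rk1, rk2]
      omega
    · intro j
      rw [count_split r h hr hhr]
      simp only [hA, hB, hC]
      obtain ⟨i, hi, hinc⟩ : ∃ i ∈ S, Inc e i j := by
        rcases hcov j with hh | hh
        · exact ⟨_, hh, Or.inl rfl⟩
        · exact ⟨_, hh, Or.inr rfl⟩
      have h1 : (Finset.univ.filter fun i : Fin r =>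
          (if i ∈ S then rkIn e i else rkOut e i) (Alt.C j) <
            (if i ∈ S then rkIn e i else rkOut e i) Alt.P).card < r := by
        conv_rhs => rw [← Fintype.card_fin r, ← Finset.card_univ]
        apply Finset.card_lt_card
        rw [Finset.filter_ssubset]
        refine ⟨i, Finset.mem_univ _, ?_⟩
        simp [hi, hinc, rkIn]
        omega
      simp [rk1, rk2]
      omega
  · rintro ⟨comp, hc, hw⟩
    rw [amend_iff _ (not_beats_PB r s h hr hhr e _ hc)] at hw
    obtain ⟨hDB, -, hCP⟩ := hw
    have hv : ∀ (i : Fin r) (x y : Alt s), vVoter e i x y → comp ⟨i, by omega⟩ x y := by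
      intro i x y hxy
      apply (hc ⟨i, by omega⟩).2
      simpa [profile11] using hxy
    refine ⟨Finset.univ.filter fun i : Fin r => ¬ comp ⟨i, by omega⟩ Alt.D Alt.B, ?_, ?_⟩
    · unfold Beats prefCount at hDB
      rw [count_split r h hr hhr] at hDB
      have h0 : (Finset.univ.filter fun i : Fin (r - h - 1) =>
          comp ⟨r + i, by omega⟩ Alt.D Alt.B).card = 0 := by
        rw [Finset.card_eq_zero, Finset.filter_eq_empty_iff]
        intro i _ hi
        have := (hc ⟨r + i, by omega⟩).1
        have h2 := (hc ⟨r + i, by omega⟩).2 Alt.B Alt.D (by simp [profile11, aux1])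
        exact this.irrefl _ (this.trans _ _ _ hi h2)
      have h2 := Finset.card_le_univ (Finset.univ.filter fun i : Fin h =>
        comp ⟨r + (r - h - 1) + i, by omega⟩ Alt.D Alt.B)
      rw [Fintype.card_fin] at h2
      have h3 := Finset.card_filter_add_card_filter_not (s := (Finset.univ : Finset (Fin r)))
        (fun i : Fin r => comp ⟨i, by omega⟩ Alt.D Alt.B)
      rw [Finset.card_univ, Fintype.card_fin] at h3
      omega
    · intro j
      by_contra hcon
      simp only [Finset.mem_filter, Finset.mem_univ, true_and, not_or, not_not] at hcon
      apply hCP j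
      unfold Beats prefCount
      rw [count_split r h hr hhr]
      have h1 : (Finset.univ.filter fun i : Fin r =>
          comp ⟨i, by omega⟩ (Alt.C j) Alt.P).card = r := by
        rw [Finset.filter_true_of_mem, Finset.card_univ, Fintype.card_fin]
        intro i _
        by_cases hinc : Inc e i j
        · have hDBi : comp ⟨i, by omega⟩ Alt.D Alt.B := by
            rcases hinc with rfl | rfl
            exacts [hcon.1, hcon.2]
          have := (hc ⟨i, by omega⟩).1
          exact this.trans _ _ _ (this.trans _ _ _ (hv i (Alt.C j) Alt.D trivial) hDBi)
            (hv i Alt.B Alt.P trivial)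
        · exact hv i _ _ hinc
      omega
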